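/- Consider a sequence of M-layer models indexed by M on a fixed finite simple graph G = (V,E) with no isolated nodes, with parameters satisfying p_ℓ(M) M^{α_ℓ} → c_ℓ > 0 for each link ℓ and q_i(M) M^{β_i} → d_i > 0 for each node i, where α_ℓ, β_i ≥ 0 and α_ℓ + β_i + β_j = 1 for every link ℓ = (i,j). Assume β_k < 1 for every node k of degree at least 2 in G. Then the probability of the event B that every one of the M layers contains at most one link tends to 1 as M → ∞. -/

import Mathlib

open MeasureTheory Filter Finset

open scoped Classical

/-- Bernoulli measure on `Bool` with success probability `p`. -/
noncomputable def bern (p : ℝ) : Measure Bool :=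
  ENNReal.ofReal p • Measure.dirac true + ENNReal.ofReal (1 - p) • Measure.dirac false

/-- The `M`-layer model: mutually independent Bernoulli variables `Y_{m,ℓ}` (link
thinning, probability `p ℓ`) and `Z_{m,i}` (node activation, probability `q i`). -/
noncomputable def netμ (V : Type) [Fintype V] (M : ℕ) (p : V × V → ℝ) (q : V → ℝ) :
    Measure (((Fin M × (V × V)) ⊕ (Fin M × V)) → Bool) :=
  Measure.pi fun k =>
    bern (Sum.elim (fun a : Fin M × (V × V) => p a.2) (fun a : Fin M × V => q a.2) k)

/-- Link `ℓ = (i,j)` exists on layer `m`: `Y_{m,ℓ} = Z_{m,i} = Z_{m,j} = 1`. -/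
def exOn {V : Type} {M : ℕ} (m : Fin M) (ℓ : V × V)
    (ω : ((Fin M × (V × V)) ⊕ (Fin M × V)) → Bool) : Prop :=
  ω (Sum.inl (m, ℓ)) = true ∧ ω (Sum.inr (m, ℓ.1)) = true ∧ ω (Sum.inr (m, ℓ.2)) = true

/-- `W_ℓ`: the number of layers on which link `ℓ` exists. -/
noncomputable def Wnum {V : Type} {M : ℕ} (ℓ : V × V)
    (ω : ((Fin M × (V × V)) ⊕ (Fin M × V)) → Bool) : ℕ :=
  (Finset.univ.filter fun m : Fin M => exOn m ℓ ω).card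

/-!
A union bound over the `M` layers and the two-link subsets `L` of `E` reduces the claim to
`M * P(L exists on a given layer) → 0`. By independence this probability is the product of the
parameters of the links of `L` and of the distinct nodes they touch, of order `M ^ (-e)`. Adding the
critical conditions of the two links counts every shared node twice, so `e ≥ 2 - ∑ β_k` over the
shared nodes `k`. Two links of a simple graph share at most one node, which then has degree at
least two, whence `β_k < 1` gives `e > 1`.
-/

open Asymptotics

theorem isProbabilityMeasure_bern {p : ℝ} (hp : p ∈ Set.Icc 0 1) :
    IsProbabilityMeasure (bern p) where
  measure_univ := by
    simp [bern, ← ENNReal.ofReal_add hp.1 (sub_nonneg.2 hp.2)]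

theorem bern_real_singleton_true {p : ℝ} (hp : 0 ≤ p) : (bern p).real {true} = p := by
  simp [bern, Measure.real, hp]

theorem pi_bern_real_pi_singleton_true {ι : Type*} [Fintype ι] {r : ι → ℝ}
    (hr : ∀ k, r k ∈ Set.Icc 0 1) (T : Finset ι) :
    (Measure.pi fun k ↦ bern (r k)).real ((T : Set ι).pi fun _ ↦ {true}) = ∏ k ∈ T, r k := by
  have (k : ι) : IsProbabilityMeasure (bern (r k)) := isProbabilityMeasure_bern (hr k)
  rw [measureReal_def, Measure.pi_pi_finset, ENNReal.toReal_prod]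
  exact prod_congr rfl fun k _ ↦ bern_real_singleton_true (hr k).1

theorem isBigO_rpow_neg_of_tendsto_mul_rpow {f : ℕ → ℝ} {a b : ℝ}
    (hf : Tendsto (fun M : ℕ ↦ f M * (M : ℝ) ^ a) atTop (nhds b)) :
    f =O[atTop] fun M : ℕ ↦ (M : ℝ) ^ (-a) := by
  refine ((hf.isBigO_one ℝ).mul (isBigO_refl (fun M : ℕ ↦ (M : ℝ) ^ (-a)) atTop)).congr' ?_ ?_
  · filter_upwards [eventually_gt_atTop 0] with M hM
    rw [mul_assoc, ← Real.rpow_add (Nat.cast_pos.2 hM), add_neg_cancel, Real.rpow_zero, mul_one]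
  · simp

theorem tendsto_natCast_mul_of_isBigO_rpow_neg {f : ℕ → ℝ} {a : ℝ} (ha : 1 < a)
    (hf : f =O[atTop] fun M : ℕ ↦ (M : ℝ) ^ (-a)) :
    Tendsto (fun M : ℕ ↦ M * f M) atTop (nhds 0) := by
  have hdecay : Tendsto (fun M : ℕ ↦ (M : ℝ) ^ (-(a - 1))) atTop (nhds 0) :=
    (tendsto_rpow_neg_atTop (sub_pos.2 ha)).comp tendsto_natCast_atTop_atTop
  have hmul := (isBigO_refl (Nat.cast : ℕ → ℝ) atTop).mul hf
  refine (hmul.congr_right fun M ↦ ?_).trans_tendsto hdecay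
  rw [← Real.rpow_one_add' M.cast_nonneg (by linarith), neg_sub, sub_eq_add_neg]

section Links

variable {V : Type*} [DecidableEq V]

/-- The set of end nodes of a link, which is encoded as an ordered pair of nodes. -/
def endpoints (ℓ : V × V) : Finset V := {ℓ.1, ℓ.2}

/-- The probability that all links of `L` exist on a given layer of the model with parameters `p`
and `q`, see `netμ_real_forall_exOn`: each node touched by `L` contributes a single factor, however
many links of `L` meet there. -/
def jointProb (p : V × V → ℝ) (q : V → ℝ) (L : Finset (V × V)) : ℝ :=
  (∏ ℓ ∈ L, p ℓ) * ∏ i ∈ L.biUnion endpoints, q i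

/-- The order of decay in `M` of `jointProb p q L` when `p ℓ` and `q i` decay like `M ^ (-α ℓ)` and
`M ^ (-β i)`, see `isBigO_jointProb`. -/
def jointExponent (α : V × V → ℝ) (β : V → ℝ) (L : Finset (V × V)) : ℝ :=
  ∑ ℓ ∈ L, α ℓ + ∑ i ∈ L.biUnion endpoints, β i

theorem jointProb_rpow_neg {x : ℝ} (hx : 0 < x) (α : V × V → ℝ) (β : V → ℝ)
    (L : Finset (V × V)) :
    jointProb (fun ℓ ↦ x ^ (-α ℓ)) (fun i ↦ x ^ (-β i)) L = x ^ (-jointExponent α β L) := by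
  rw [jointProb, jointExponent, ← Real.rpow_sum_of_pos hx, ← Real.rpow_sum_of_pos hx,
    ← Real.rpow_add hx, sum_neg_distrib, sum_neg_distrib, neg_add]

theorem isBigO_jointProb {p : ℕ → V × V → ℝ} {q : ℕ → V → ℝ} {α : V × V → ℝ} {β : V → ℝ}
    {L : Finset (V × V)}
    (hp : ∀ ℓ ∈ L, (fun M ↦ p M ℓ) =O[atTop] fun M : ℕ ↦ (M : ℝ) ^ (-α ℓ))
    (hq : ∀ i ∈ L.biUnion endpoints,
      (fun M ↦ q M i) =O[atTop] fun M : ℕ ↦ (M : ℝ) ^ (-β i)) :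
    (fun M ↦ jointProb (p M) (q M) L) =O[atTop]
      fun M : ℕ ↦ (M : ℝ) ^ (-jointExponent α β L) := by
  refine ((IsBigO.finsetProd hp).mul (IsBigO.finsetProd hq)).congr' .rfl ?_
  filter_upwards [eventually_gt_atTop 0] with M hM
  exact jointProb_rpow_neg (Nat.cast_pos.2 hM) α β L

theorem jointExponent_pair_add_sum_inter (α : V × V → ℝ) (β : V → ℝ) {ℓ ℓ' : V × V}
    (hℓ : ℓ.1 ≠ ℓ.2) (hℓ' : ℓ'.1 ≠ ℓ'.2) (hne : ℓ ≠ ℓ') :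
    jointExponent α β {ℓ, ℓ'} + ∑ i ∈ endpoints ℓ ∩ endpoints ℓ', β i =
      (α ℓ + β ℓ.1 + β ℓ.2) + (α ℓ' + β ℓ'.1 + β ℓ'.2) := by
  rw [jointExponent, sum_pair hne, biUnion_insert, singleton_biUnion, add_assoc, sum_union_inter,
    endpoints, endpoints, sum_pair hℓ, sum_pair hℓ']
  ring

theorem card_endpoints_inter_le_one {ℓ ℓ' : V × V} (hne : ℓ ≠ ℓ') (hswap : ℓ ≠ ℓ'.swap) :
    #(endpoints ℓ ∩ endpoints ℓ') ≤ 1 := by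
  refine card_le_one.2 fun a ha b hb ↦ by_contra fun hab ↦ ?_
  simp only [endpoints, mem_inter, mem_insert, mem_singleton, ← Sym2.mem_iff] at ha hb
  have heq : s(ℓ.1, ℓ.2) = s(ℓ'.1, ℓ'.2) := Sym2.eq_of_ne_mem hab ha.1 hb.1 ha.2 hb.2
  exact (Sym2.mk_eq_mk_iff.1 heq).elim hne hswap

theorem sum_endpoints_inter_lt_one {E : Finset (V × V)} {β : V → ℝ}
    (hE : ∀ ℓ ∈ E, (ℓ.2, ℓ.1) ∉ E)
    (hreg : ∀ k, 2 ≤ #{ℓ ∈ E | ℓ.1 = k ∨ ℓ.2 = k} → β k < 1)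
    {ℓ ℓ' : V × V} (hℓ : ℓ ∈ E) (hℓ' : ℓ' ∈ E) (hne : ℓ ≠ ℓ') :
    ∑ i ∈ endpoints ℓ ∩ endpoints ℓ', β i < 1 := by
  have hswap : ℓ ≠ ℓ'.swap := by rintro rfl; exact hE ℓ' hℓ' hℓ
  rcases Nat.le_one_iff_eq_zero_or_eq_one.1 (card_endpoints_inter_le_one hne hswap) with
    hzero | hone
  · rw [card_eq_zero.1 hzero, sum_empty]
    exact one_pos
  · obtain ⟨k, hk⟩ := card_eq_one.1 hone
    have hmem : k ∈ endpoints ℓ ∩ endpoints ℓ' := hk ▸ mem_singleton_self k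
    simp only [endpoints, mem_inter, mem_insert, mem_singleton, eq_comm (a := k)] at hmem
    rw [hk, sum_singleton]
    exact hreg k (one_lt_card.2
      ⟨ℓ, mem_filter.2 ⟨hℓ, hmem.1⟩, ℓ', mem_filter.2 ⟨hℓ', hmem.2⟩, hne⟩)

theorem one_lt_jointExponent {E : Finset (V × V)} {α : V × V → ℝ} {β : V → ℝ}
    (hE1 : ∀ ℓ ∈ E, ℓ.1 ≠ ℓ.2) (hE2 : ∀ ℓ ∈ E, (ℓ.2, ℓ.1) ∉ E)
    (hcrit : ∀ ℓ ∈ E, 1 ≤ α ℓ + β ℓ.1 + β ℓ.2)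
    (hreg : ∀ k, 2 ≤ #{ℓ ∈ E | ℓ.1 = k ∨ ℓ.2 = k} → β k < 1)
    {L : Finset (V × V)} (hL : L ∈ E.powersetCard 2) :
    1 < jointExponent α β L := by
  obtain ⟨hLE, hcard⟩ := mem_powersetCard.1 hL
  obtain ⟨ℓ, ℓ', hne, rfl⟩ := card_eq_two.1 hcard
  have hℓ : ℓ ∈ E := hLE (mem_insert_self ℓ _)
  have hℓ' : ℓ' ∈ E := hLE (mem_insert_of_mem (mem_singleton_self ℓ'))
  linarith [jointExponent_pair_add_sum_inter α β (hE1 ℓ hℓ) (hE1 ℓ' hℓ') hne,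
    sum_endpoints_inter_lt_one hE2 hreg hℓ hℓ' hne, hcrit ℓ hℓ, hcrit ℓ' hℓ']

end Links

section Model

variable {V : Type} {M : ℕ} {p : V × V → ℝ} {q : V → ℝ}

/-- The event `B` that every one of the `M` layers contains at most one link of `E`, as a subset
of the sample space of `netμ`. -/
def atMostOneLink (M : ℕ) (E : Finset (V × V)) :
    Set (((Fin M × (V × V)) ⊕ (Fin M × V)) → Bool) :=
  {ω | ∀ m : Fin M, ∀ ℓ ∈ E, ∀ ℓ' ∈ E, exOn m ℓ ω → exOn m ℓ' ω → ℓ = ℓ'}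

theorem compl_atMostOneLink_subset (M : ℕ) (E : Finset (V × V)) :
    (atMostOneLink M E)ᶜ ⊆
      ⋃ L ∈ E.powersetCard 2, ⋃ m ∈ (univ : Finset (Fin M)), {ω | ∀ ℓ ∈ L, exOn m ℓ ω} := by
  intro ω hω
  simp only [atMostOneLink, Set.mem_compl_iff, Set.mem_ofPred_eq, not_forall] at hω
  obtain ⟨m, ℓ, hℓ, ℓ', hℓ', h, h', hne⟩ := hω
  simp only [Set.mem_iUnion]
  refine ⟨{ℓ, ℓ'}, mem_powersetCard.2 ⟨?_, card_pair hne⟩, m, mem_univ m, ?_⟩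
  · simp [insert_subset_iff, hℓ, hℓ']
  · simp [h, h']

section Coordinates

variable [DecidableEq V]

/-- The coordinates of the sample space on which the existence of all links of `L` on layer `m`
depends. -/
def layerCoords (m : Fin M) (L : Finset (V × V)) : Finset ((Fin M × (V × V)) ⊕ (Fin M × V)) :=
  ({m} ×ˢ L).disjSum ({m} ×ˢ L.biUnion endpoints)

theorem setOf_forall_exOn_eq_pi (m : Fin M) (L : Finset (V × V)) :
    {ω | ∀ ℓ ∈ L, exOn m ℓ ω} =
      (layerCoords m L : Set ((Fin M × (V × V)) ⊕ (Fin M × V))).pi fun _ ↦ {true} := by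
  ext ω
  simp only [Set.mem_ofPred_eq, Set.mem_pi, Set.mem_singleton_iff, layerCoords, mem_coe, Sum.forall,
    inl_mem_disjSum, inr_mem_disjSum, mem_product, mem_singleton, mem_biUnion]
  grind [exOn, endpoints]

theorem prod_layerCoords (m : Fin M) (L : Finset (V × V)) :
    ∏ k ∈ layerCoords m L,
        Sum.elim (fun a : Fin M × (V × V) ↦ p a.2) (fun a : Fin M × V ↦ q a.2) k =
      jointProb p q L := by
  simp [layerCoords, jointProb, prod_disjSum]

end Coordinates

variable [Fintype V]

theorem isProbabilityMeasure_netμ (M : ℕ) (hp : ∀ ℓ, p ℓ ∈ Set.Icc 0 1)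
    (hq : ∀ i, q i ∈ Set.Icc 0 1) : IsProbabilityMeasure (netμ V M p q) := by
  have (k : (Fin M × (V × V)) ⊕ (Fin M × V)) :
      IsProbabilityMeasure (bern (Sum.elim (fun a ↦ p a.2) (fun a ↦ q a.2) k)) :=
    isProbabilityMeasure_bern (Sum.rec (fun a ↦ hp a.2) (fun a ↦ hq a.2) k)
  exact Measure.pi.instIsProbabilityMeasure _

variable [DecidableEq V]

theorem netμ_real_forall_exOn (hp : ∀ ℓ, p ℓ ∈ Set.Icc 0 1) (hq : ∀ i, q i ∈ Set.Icc 0 1)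
    (m : Fin M) (L : Finset (V × V)) :
    (netμ V M p q).real {ω | ∀ ℓ ∈ L, exOn m ℓ ω} = jointProb p q L := by
  rw [setOf_forall_exOn_eq_pi, netμ, pi_bern_real_pi_singleton_true, prod_layerCoords]
  exact Sum.rec (fun a ↦ hp a.2) (fun a ↦ hq a.2)

theorem netμ_real_compl_atMostOneLink_le (hp : ∀ ℓ, p ℓ ∈ Set.Icc 0 1)
    (hq : ∀ i, q i ∈ Set.Icc 0 1) (E : Finset (V × V)) :
    (netμ V M p q).real (atMostOneLink M E)ᶜ ≤ ∑ L ∈ E.powersetCard 2, M * jointProb p q L := by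
  have := isProbabilityMeasure_netμ M hp hq
  calc (netμ V M p q).real (atMostOneLink M E)ᶜ
    _ ≤ (netμ V M p q).real (⋃ L ∈ E.powersetCard 2, ⋃ m ∈ (univ : Finset (Fin M)),
          {ω | ∀ ℓ ∈ L, exOn m ℓ ω}) :=
        measureReal_mono (compl_atMostOneLink_subset M E) (measure_ne_top _ _)
    _ ≤ ∑ L ∈ E.powersetCard 2, (netμ V M p q).real
          (⋃ m ∈ (univ : Finset (Fin M)), {ω | ∀ ℓ ∈ L, exOn m ℓ ω}) :=
        measureReal_biUnion_finset_le _ _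
    _ ≤ ∑ L ∈ E.powersetCard 2, ∑ m : Fin M, (netμ V M p q).real {ω | ∀ ℓ ∈ L, exOn m ℓ ω} :=
        sum_le_sum fun _ _ ↦ measureReal_biUnion_finset_le _ _
    _ = ∑ L ∈ E.powersetCard 2, M * jointProb p q L := by
        simp only [netμ_real_forall_exOn hp hq, sum_const, card_univ, Fintype.card_fin,
          nsmul_eq_mul]

theorem tendsto_netμ_real_atMostOneLink {p : ℕ → V × V → ℝ} {q : ℕ → V → ℝ}
    {E : Finset (V × V)}
    (hp : ∀ M ℓ, p M ℓ ∈ Set.Icc 0 1) (hq : ∀ M i, q M i ∈ Set.Icc 0 1)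
    (hpair : ∀ L ∈ E.powersetCard 2,
      Tendsto (fun M : ℕ ↦ M * jointProb (p M) (q M) L) atTop (nhds 0)) :
    Tendsto (fun M ↦ (netμ V M (p M) (q M)).real (atMostOneLink M E)) atTop (nhds 1) := by
  have hbound : Tendsto (fun M : ℕ ↦ ∑ L ∈ E.powersetCard 2, M * jointProb (p M) (q M) L)
      atTop (nhds 0) := by
    simpa only [sum_const_zero] using tendsto_finsetSum _ hpair
  have hcompl : Tendsto (fun M ↦ (netμ V M (p M) (q M)).real (atMostOneLink M E)ᶜ)
      atTop (nhds 0) :=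
    squeeze_zero (fun _ ↦ measureReal_nonneg)
      (fun M ↦ netμ_real_compl_atMostOneLink_le (hp M) (hq M) E) hbound
  rw [← sub_zero (1 : ℝ)]
  refine (hcompl.const_sub 1).congr fun M ↦ ?_
  have := isProbabilityMeasure_netμ M (hp M) (hq M)
  rw [probReal_compl_eq_one_sub (Set.toFinite _).measurableSet, sub_sub_cancel]

theorem stmt18_general (E : Finset (V × V))
    (hE1 : ∀ ℓ ∈ E, ℓ.1 ≠ ℓ.2) (hE2 : ∀ ℓ ∈ E, (ℓ.2, ℓ.1) ∉ E)
    (p : ℕ → V × V → ℝ) (q : ℕ → V → ℝ)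
    (hp : ∀ M ℓ, p M ℓ ∈ Set.Icc 0 1) (hq : ∀ M i, q M i ∈ Set.Icc 0 1)
    (α : V × V → ℝ) (β : V → ℝ)
    (hpO : ∀ ℓ ∈ E, (fun M ↦ p M ℓ) =O[atTop] fun M : ℕ ↦ (M : ℝ) ^ (-α ℓ))
    (hqO : ∀ i, (fun M ↦ q M i) =O[atTop] fun M : ℕ ↦ (M : ℝ) ^ (-β i))
    (hcrit : ∀ ℓ ∈ E, 1 ≤ α ℓ + β ℓ.1 + β ℓ.2)
    (hreg : ∀ k, 2 ≤ #{ℓ ∈ E | ℓ.1 = k ∨ ℓ.2 = k} → β k < 1) :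
    Tendsto (fun M ↦ (netμ V M (p M) (q M)).real (atMostOneLink M E)) atTop (nhds 1) := by
  refine tendsto_netμ_real_atMostOneLink hp hq fun L hL ↦ ?_
  have hLE : L ⊆ E := (mem_powersetCard.1 hL).1
  exact tendsto_natCast_mul_of_isBigO_rpow_neg (one_lt_jointExponent hE1 hE2 hcrit hreg hL)
    (isBigO_jointProb (fun ℓ hℓ ↦ hpO ℓ (hLE hℓ)) fun i _ ↦ hqO i)

end Model

/-- under the critical scaling `α_ℓ + β_i + β_j = 1` for every link
`ℓ = (i,j)`, with `β_k < 1` for every node of degree at least 2 and no isolated nodes,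
the probability that every layer contains at most one link tends to 1. -/
theorem stmt18 {V : Type} [Fintype V] [DecidableEq V] (E : Finset (V × V))
    (hE1 : ∀ ℓ ∈ E, ℓ.1 ≠ ℓ.2) (hE2 : ∀ ℓ ∈ E, (ℓ.2, ℓ.1) ∉ E)
    (hiso : ∀ v : V, ∃ ℓ ∈ E, ℓ.1 = v ∨ ℓ.2 = v)
    (p : ℕ → (V × V) → ℝ) (q : ℕ → V → ℝ)
    (hp : ∀ M ℓ, p M ℓ ∈ Set.Ioc (0 : ℝ) 1) (hq : ∀ M i, q M i ∈ Set.Ioc (0 : ℝ) 1)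
    (α c : (V × V) → ℝ) (β d : V → ℝ)
    (hα : ∀ ℓ ∈ E, 0 ≤ α ℓ) (hβ : ∀ i, 0 ≤ β i)
    (hc : ∀ ℓ ∈ E, 0 < c ℓ) (hd : ∀ i, 0 < d i)
    (hplim : ∀ ℓ ∈ E, Tendsto (fun M : ℕ => p M ℓ * (M : ℝ) ^ (α ℓ)) atTop (nhds (c ℓ)))
    (hqlim : ∀ i, Tendsto (fun M : ℕ => q M i * (M : ℝ) ^ (β i)) atTop (nhds (d i)))
    (hcrit : ∀ ℓ ∈ E, α ℓ + β ℓ.1 + β ℓ.2 = 1)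
    (hreg : ∀ k : V, 2 ≤ (E.filter fun ℓ => ℓ.1 = k ∨ ℓ.2 = k).card → β k < 1) :
    Tendsto (fun M : ℕ =>
        ((netμ V M (p M) (q M))
          {ω | ∀ m : Fin M, ∀ ℓ ∈ E, ∀ ℓ' ∈ E, exOn m ℓ ω → exOn m ℓ' ω → ℓ = ℓ'}).toReal)
      atTop (nhds 1) := by
  exact stmt18_general E hE1 hE2 p q (fun M ℓ ↦ Set.Ioc_subset_Icc_self (hp M ℓ))
    (fun M i ↦ Set.Ioc_subset_Icc_self (hq M i)) α β
    (fun ℓ hℓ ↦ isBigO_rpow_neg_of_tendsto_mul_rpow (hplim ℓ hℓ))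
    (fun i ↦ isBigO_rpow_neg_of_tendsto_mul_rpow (hqlim i)) (fun ℓ hℓ ↦ (hcrit ℓ hℓ).ge) hreg
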